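/- Fix a finite terminal set K of size k. The set M_k of minimum terminal cut vectors of all weighted graphs with terminal set K is a convex cone in ℝ^p, where p = 2^{k−1}−1: it contains 0, is closed under multiplication by nonnegative scalars, and is closed under addition (equivalently, under convex combinations). -/

import Mathlib

open scoped Classical

/-- A weighted graph with a distinguished embedded set of terminals indexed by `κ`:
a finite vertex type `V`, an embedding `ι : κ ↪ V` of the terminals, and a symmetric
nonnegative capacity function `c` on pairs of vertices. -/
structure WeightedGraph (κ : Type) where
  V : Type
  [fintypeV : Fintype V]
  ι : κ ↪ V
  c : V → V → ℝ
  symm : ∀ u v, c u v = c v u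
  nonneg : ∀ u v, 0 ≤ c u v

namespace WeightedGraph

variable {κ : Type}

instance (G : WeightedGraph κ) : Fintype G.V := G.fintypeV

/-- The cut function `h_G(A) = Σ_{u ∈ A, v ∉ A} c(u,v)`. -/
noncomputable def cutval (G : WeightedGraph κ) (A : Finset G.V) : ℝ :=
  ∑ u ∈ A, ∑ v ∈ Aᶜ, G.c u v

/-- The vertex sets realizing the terminal partition `(U, K \ U)`. -/
noncomputable def cutSets (G : WeightedGraph κ) (U : Finset κ) : Finset (Finset G.V) :=
  Finset.univ.filter fun A => ∀ x : κ, G.ι x ∈ A ↔ x ∈ U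

theorem cutSets_nonempty (G : WeightedGraph κ) (U : Finset κ) : (G.cutSets U).Nonempty := by
  refine ⟨U.image G.ι, ?_⟩
  simp [cutSets, Finset.mem_image, G.ι.injective.eq_iff]

/-- The terminal cut function `h_K^G(U) = min { h_G(A) : A ∩ K = U }`. -/
noncomputable def termCut (G : WeightedGraph κ) (U : Finset κ) : ℝ :=
  (G.cutSets U).inf' (G.cutSets_nonempty U) G.cutval

/-- `H` is a mimicking network for `(G, K)`: all minimum terminal cut values agree. -/
def IsMimicking (G H : WeightedGraph κ) : Prop :=
  ∀ U : Finset κ, H.termCut U = G.termCut U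

/-- `H` is a quotient (contraction) of `G` along the surjection `f`: terminals map to
terminals, and capacities between distinct classes are sums of the original capacities. -/
def IsQuotient (G H : WeightedGraph κ) (f : G.V → H.V) : Prop :=
  Function.Surjective f ∧ (∀ x : κ, f (G.ι x) = H.ι x) ∧
    ∀ y z : H.V, y ≠ z →
      H.c y z = ∑ u ∈ Finset.univ.filter (fun u => f u = y),
        ∑ v ∈ Finset.univ.filter (fun v => f v = z), G.c u v

end WeightedGraph

/-- The index set of the `p = 2^(k-1) - 1` terminal cuts: nonempty subsets `U ⊆ K`
avoiding the fixed terminal `t` (= `v_k`). -/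
def CutIndex (κ : Type) (t : κ) := {U : Finset κ // U.Nonempty ∧ t ∉ U}

/-- The minimum terminal cut vector (MTCV) of `G`: the vector of all minimum terminal
cut values, indexed by `CutIndex κ t`. -/
noncomputable def mtcv {κ : Type} (G : WeightedGraph κ) (t : κ) : CutIndex κ t → ℝ :=
  fun U => G.termCut U.1

/-- `M_k`: the set of minimum terminal cut vectors of all weighted graphs with
terminal set `K` (indexed by `κ`). -/
def MTCVSet (κ : Type) (t : κ) : Set (CutIndex κ t → ℝ) :=
  {m | ∃ G : WeightedGraph κ, m = mtcv G t}

/-!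
Gluing two graphs along their terminals adds their terminal cut functions: a vertex set of the
glued graph with terminal trace `U` restricts to a vertex set with trace `U` in each of the two
graphs, its cut value is the sum of the two restricted ones, and every pair of vertex sets with
trace `U` arises in this way, so that the two summands are minimized independently.
-/

section Fibres

variable {V W M : Type*} [Fintype V]

/-- The preimage of a finite set under a map with finite domain, used to restrict vertex sets. In
contrast to `Finset.preimage`, the map need not be injective. -/
noncomputable def finitePreimage (f : V → W) (A : Finset W) : Finset V :=
  {u | f u ∈ A}

theorem mem_finitePreimage {f : V → W} {A : Finset W} {u : V} :
    u ∈ finitePreimage f A ↔ f u ∈ A :=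
  Finset.mem_filter_univ u

theorem finitePreimage_compl [Fintype W] (f : V → W) (A : Finset W) :
    finitePreimage f Aᶜ = (finitePreimage f A)ᶜ := by
  ext u
  simp only [mem_finitePreimage, Finset.mem_compl]

theorem finitePreimage_inl_disjSum (A : Finset V) (B : Finset W) :
    finitePreimage Sum.inl (A.disjSum B) = A := by
  ext u
  rw [mem_finitePreimage, Finset.inl_mem_disjSum]

variable [AddCommMonoid M]

theorem sum_finitePreimage (f : V → W) (A : Finset W) (g : V → M) :
    ∑ u ∈ finitePreimage f A, g u = ∑ x ∈ A, ∑ u with f u = x, g u :=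
  (Finset.sum_fiberwise_eq_sum_filter Finset.univ A f g).symm

/-- The capacity function on `W` obtained from `c` by contracting `V` along `f`: the capacity
between `x` and `y` is the total capacity between their fibres. -/
noncomputable def capacityPushforward (f : V → W) (c : V → V → M) (x y : W) : M :=
  ∑ u with f u = x, ∑ v with f v = y, c u v

theorem capacityPushforward_comm {c : V → V → M} (hc : ∀ u v, c u v = c v u) (f : V → W)
    (x y : W) : capacityPushforward f c x y = capacityPushforward f c y x :=
  Finset.sum_comm.trans <| Finset.sum_congr rfl fun v _ => Finset.sum_congr rfl fun u _ => hc u v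

theorem capacityPushforward_nonneg [PartialOrder M] [IsOrderedAddMonoid M] {c : V → V → M}
    (hc : ∀ u v, 0 ≤ c u v) (f : V → W) (x y : W) : 0 ≤ capacityPushforward f c x y :=
  Finset.sum_nonneg fun u _ => Finset.sum_nonneg fun v _ => hc u v

theorem sum_capacityPushforward (f : V → W) (c : V → V → M) (A B : Finset W) :
    ∑ x ∈ A, ∑ y ∈ B, capacityPushforward f c x y =
      ∑ u ∈ finitePreimage f A, ∑ v ∈ finitePreimage f B, c u v := by
  calc ∑ x ∈ A, ∑ y ∈ B, capacityPushforward f c x y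
      = ∑ x ∈ A, ∑ u with f u = x, ∑ y ∈ B, ∑ v with f v = y, c u v :=
        Finset.sum_congr rfl fun _ _ => Finset.sum_comm
    _ = ∑ u ∈ finitePreimage f A, ∑ v ∈ finitePreimage f B, c u v := by
        simp only [sum_finitePreimage]

end Fibres

namespace WeightedGraph

variable {κ : Type} (G H : WeightedGraph κ) (U : Finset κ)

theorem mem_cutSets {G : WeightedGraph κ} {U : Finset κ} {A : Finset G.V} :
    A ∈ G.cutSets U ↔ ∀ x, G.ι x ∈ A ↔ x ∈ U := by
  simp only [cutSets, Finset.mem_filter_univ]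

theorem finitePreimage_mem_cutSets_iff {G H : WeightedGraph κ} {f : G.V → H.V}
    (hf : ∀ x, f (G.ι x) = H.ι x) {U : Finset κ} {A : Finset H.V} :
    finitePreimage f A ∈ G.cutSets U ↔ A ∈ H.cutSets U := by
  simp only [mem_cutSets, mem_finitePreimage, hf]

theorem isLeast_termCut : IsLeast (G.cutval '' G.cutSets U) (G.termCut U) := by
  obtain ⟨A, hA, hcut⟩ := Finset.exists_mem_eq_inf' (G.cutSets_nonempty U) G.cutval
  exact ⟨⟨A, hA, hcut.symm⟩, Set.forall_mem_image.2 fun _ hB => Finset.inf'_le _ hB⟩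

/-- The graph on the terminal set without edges; its minimum terminal cut vector is `0`. -/
def edgeless (κ : Type) [Fintype κ] : WeightedGraph κ where
  V := κ
  ι := Function.Embedding.refl κ
  c _ _ := 0
  symm _ _ := rfl
  nonneg _ _ := le_rfl

theorem cutval_edgeless [Fintype κ] (A : Finset κ) : (edgeless κ).cutval A = 0 :=
  Finset.sum_eq_zero fun _ _ => Finset.sum_const_zero

theorem termCut_edgeless [Fintype κ] : (edgeless κ).termCut U = 0 := by
  obtain ⟨A, -, hA⟩ := ((edgeless κ).isLeast_termCut U).1
  exact hA.symm.trans (cutval_edgeless A)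

/-- The graph `G` with all capacities multiplied by `a`. -/
def scale (a : ℝ) (ha : 0 ≤ a) : WeightedGraph κ where
  V := G.V
  ι := G.ι
  c u v := a * G.c u v
  symm u v := by rw [G.symm]
  nonneg u v := mul_nonneg ha (G.nonneg u v)

variable {a : ℝ} (ha : 0 ≤ a)

theorem cutval_scale (A : Finset G.V) : (G.scale a ha).cutval A = a * G.cutval A := by
  simp only [cutval, Finset.mul_sum]
  rfl

theorem termCut_scale : (G.scale a ha).termCut U = a * G.termCut U := by
  have image_cutval : (G.scale a ha).cutval '' (G.scale a ha).cutSets U =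
      (a * ·) '' (G.cutval '' G.cutSets U) := by
    rw [Set.image_image]
    exact Set.image_congr fun A _ => G.cutval_scale ha A
  have hleast := (monotone_mul_left_of_nonneg ha).map_isLeast (G.isLeast_termCut U)
  rw [← image_cutval] at hleast
  exact ((G.scale a ha).isLeast_termCut U).unique hleast

/-- `K` is glued from `G` and `H` along their terminals, by means of the vertex maps `f` and `g`:
its capacities are those of `G` and `H` together, and any two vertex sets of `G` and `H` with the
same terminal trace come from a common vertex set of `K`. The vertices of `K` outside the images
of `f` and `g` are isolated, so `f` and `g` need not be jointly surjective. -/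
structure IsGluing (G H K : WeightedGraph κ) (f : G.V → K.V) (g : H.V → K.V) : Prop where
  map_terminal_left : ∀ x, f (G.ι x) = K.ι x
  map_terminal_right : ∀ x, g (H.ι x) = K.ι x
  capacity_eq_add :
    ∀ x y, K.c x y = capacityPushforward f G.c x y + capacityPushforward g H.c x y
  exists_finitePreimage_eq : ∀ U, ∀ A ∈ G.cutSets U, ∀ B ∈ H.cutSets U,
    ∃ C : Finset K.V, finitePreimage f C = A ∧ finitePreimage g C = B

namespace IsGluing

variable {G H} {K : WeightedGraph κ} {f : G.V → K.V} {g : H.V → K.V}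

theorem cutval_eq_add (h : IsGluing G H K f g) (A : Finset K.V) :
    K.cutval A = G.cutval (finitePreimage f A) + H.cutval (finitePreimage g A) := by
  simp only [cutval, h.capacity_eq_add, Finset.sum_add_distrib, sum_capacityPushforward,
    finitePreimage_compl]

theorem image_cutval_cutSets (h : IsGluing G H K f g) (U : Finset κ) :
    K.cutval '' K.cutSets U =
      Set.image2 (· + ·) (G.cutval '' G.cutSets U) (H.cutval '' H.cutSets U) := by
  rw [Set.image2_image_left, Set.image2_image_right]
  apply Set.Subset.antisymm
  · rintro _ ⟨C, hC, rfl⟩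
    exact ⟨_, (finitePreimage_mem_cutSets_iff h.map_terminal_left).2 hC, _,
      (finitePreimage_mem_cutSets_iff h.map_terminal_right).2 hC, (h.cutval_eq_add C).symm⟩
  · rintro _ ⟨_, hA, _, hB, rfl⟩
    obtain ⟨C, rfl, rfl⟩ := h.exists_finitePreimage_eq U _ hA _ hB
    exact ⟨C, (finitePreimage_mem_cutSets_iff h.map_terminal_left).1 hA, h.cutval_eq_add C⟩

theorem termCut_eq_add (h : IsGluing G H K f g) (U : Finset κ) :
    K.termCut U = G.termCut U + H.termCut U := by
  have hleast := (G.isLeast_termCut U).image2 (f := (· + ·)) (fun _ => add_left_mono)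
    (fun _ => add_right_mono) (H.isLeast_termCut U)
  rw [← h.image_cutval_cutSets U] at hleast
  exact (K.isLeast_termCut U).unique hleast

end IsGluing

/-- The map from the vertices of `H` to those of `glue G H`, which sends each terminal of `H` to
the corresponding terminal of `G`. -/
noncomputable def glueMap : H.V → G.V ⊕ H.V :=
  Function.extend H.ι (Sum.inl ∘ G.ι) Sum.inr

theorem glueMap_terminal (x : κ) : G.glueMap H (H.ι x) = Sum.inl (G.ι x) :=
  H.ι.injective.extend_apply _ _ x

theorem glueMap_of_not_terminal {v : H.V} (hv : ¬∃ x, H.ι x = v) : G.glueMap H v = Sum.inr v :=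
  Function.extend_apply' _ _ v hv

theorem finitePreimage_glueMap_disjSum {U : Finset κ} {A : Finset G.V} {B : Finset H.V}
    (hA : A ∈ G.cutSets U) (hB : B ∈ H.cutSets U) :
    finitePreimage (G.glueMap H) (A.disjSum B) = B := by
  ext v
  rw [mem_finitePreimage]
  by_cases hv : ∃ x, H.ι x = v
  · obtain ⟨x, rfl⟩ := hv
    rw [glueMap_terminal, Finset.inl_mem_disjSum, mem_cutSets.1 hA, mem_cutSets.1 hB]
  · rw [glueMap_of_not_terminal G H hv, Finset.inr_mem_disjSum]

/-- The union of `G` and `H` with their terminals identified. To keep the vertex type a plain sum,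
the terminals of `H` also stay behind as isolated nonterminal vertices. -/
noncomputable def glue : WeightedGraph κ where
  V := G.V ⊕ H.V
  ι := G.ι.trans Function.Embedding.inl
  c x y := capacityPushforward Sum.inl G.c x y + capacityPushforward (G.glueMap H) H.c x y
  symm x y := by rw [capacityPushforward_comm G.symm, capacityPushforward_comm H.symm]
  nonneg x y :=
    add_nonneg (capacityPushforward_nonneg G.nonneg _ x y)
      (capacityPushforward_nonneg H.nonneg _ x y)

theorem isGluing_glue : IsGluing G H (G.glue H) Sum.inl (G.glueMap H) where
  map_terminal_left _ := rfl
  map_terminal_right := G.glueMap_terminal H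
  capacity_eq_add _ _ := rfl
  exists_finitePreimage_eq _ A hA B hB :=
    ⟨A.disjSum B, finitePreimage_inl_disjSum A B, finitePreimage_glueMap_disjSum G H hA hB⟩

theorem termCut_glue : (G.glue H).termCut U = G.termCut U + H.termCut U :=
  (G.isGluing_glue H).termCut_eq_add U

end WeightedGraph

theorem natCard_cutIndex (κ : Type) [Fintype κ] (t : κ) :
    Nat.card (CutIndex κ t) = 2 ^ (Fintype.card κ - 1) - 1 := by
  have hindex (U : Finset κ) :
      U ∈ (Finset.univ.erase t).powerset.erase ∅ ↔ U.Nonempty ∧ t ∉ U := by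
    simp [Finset.nonempty_iff_ne_empty, Finset.subset_erase]
  calc Nat.card (CutIndex κ t)
      = ((Finset.univ.erase t).powerset.erase ∅).card := Nat.subtype_card _ hindex
    _ = 2 ^ (Fintype.card κ - 1) - 1 := by
      rw [Finset.card_erase_of_mem (Finset.empty_mem_powerset _), Finset.card_powerset,
        Finset.card_erase_of_mem (Finset.mem_univ t), Finset.card_univ]

/-- `M_k` is a convex cone in `ℝ^p`, `p = 2^(k-1) - 1`: it contains `0`,
is closed under nonnegative scaling and under addition. -/
theorem mtcvSet_convex_cone (κ : Type) [Fintype κ] (t : κ) (k : ℕ)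
    (hk : Fintype.card κ = k) :
    Nat.card (CutIndex κ t) = 2 ^ (k - 1) - 1 ∧
    (0 : CutIndex κ t → ℝ) ∈ MTCVSet κ t ∧
    (∀ m ∈ MTCVSet κ t, ∀ a : ℝ, 0 ≤ a → a • m ∈ MTCVSet κ t) ∧
    (∀ m₁ ∈ MTCVSet κ t, ∀ m₂ ∈ MTCVSet κ t, m₁ + m₂ ∈ MTCVSet κ t) := by
  subst hk
  refine ⟨natCard_cutIndex κ t, ⟨WeightedGraph.edgeless κ, ?_⟩, ?_, ?_⟩
  · exact funext fun U => (WeightedGraph.termCut_edgeless U.1).symm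
  · rintro _ ⟨G, rfl⟩ a ha
    exact ⟨G.scale a ha, funext fun U => (G.termCut_scale U.1 ha).symm⟩
  · rintro _ ⟨G, rfl⟩ _ ⟨H, rfl⟩
    exact ⟨G.glue H, funext fun U => (G.termCut_glue H U.1).symm⟩
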